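/- Let G be a finite group and k a field whose characteristic does not divide |G|. Let e = Σ_{g} μ_g·g and e' = Σ_{g} μ'_g·g be subcentral idempotents of kG, let K (resp. K') be the subgroup of G generated by {g : μ_g ≠ 0} (resp. {g : μ'_g ≠ 0}), and set I := span_k{h·e : h ∈ K}, I' := span_k{h·e' : h ∈ K'}. Fix g, g' ∈ G and define the partial coactions ρ : I → I ⊗ kG, ρ(x) = x_{(1)}·e ⊗ g·x_{(2)}, and ρ' : I' → I' ⊗ kG, ρ'(x) = x_{(1)}·e' ⊗ g'·x_{(2)}. Then there exists a k-linear bijection f : I → I' with (f ⊗ id)(ρ(x)) = ρ'(f(x)) for all x ∈ I (an isomorphism of partial kG-comodules) if and only if K = K', g·K = g'·K, and there exists a group homomorphism ν : K → kˣ such that the algebra automorphism of kK sending h ↦ ν(h)·h maps e to e' (i.e. Σ_h ν(h)·μ_h·h = e'). -/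

import Mathlib

open TensorProduct

/-- The comultiplication of the group Hopf algebra `kG`, determined by `Δ(g) = g ⊗ g`. -/
noncomputable def gaComul (k G : Type*) [Field k] [Group G] :
    MonoidAlgebra k G →ₗ[k] MonoidAlgebra k G ⊗[k] MonoidAlgebra k G :=
  (Finsupp.lsum k fun g => LinearMap.toSpanSingleton k _
    (MonoidAlgebra.of k G g ⊗ₜ[k] MonoidAlgebra.of k G g)) ∘ₗ
    (MonoidAlgebra.coeffLinearEquiv k).toLinearMap

/-- The counit of the group Hopf algebra `kG`, determined by `ε(g) = 1`. -/
noncomputable def gaCounit (k G : Type*) [Field k] [Group G] :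
    MonoidAlgebra k G →ₗ[k] k :=
  (Finsupp.lsum k fun _ => LinearMap.id) ∘ₗ (MonoidAlgebra.coeffLinearEquiv k).toLinearMap

/-- The antipode of the group Hopf algebra `kG`, determined by `S(g) = g⁻¹`. -/
noncomputable def gaAntipode (k G : Type*) [Field k] [Group G] :
    MonoidAlgebra k G →ₗ[k] MonoidAlgebra k G :=
  MonoidAlgebra.mapDomainLinearMap k k (fun g : G => g⁻¹)

/-!
Comparing coefficients in the second tensor factor, `f` intertwines the two coactions at `x` iff
`x_h • f (h e) = (f x)_{t h} • (t h) e'` for every `h`, where `t = g'⁻¹ g`. Taking `x = u e` shows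
that an injective such `f` sends `u e` to `w_u • (t u) e'` with a unit `w_u` for each `u ∈ K`, and
that `w_{u m} e_m = w_u e'_m` for all `u, m ∈ K`. Hence `e` and `e'` have the same support and, for
`m` in this support, `w_{u m} / w_u` does not depend on `u`; since the support generates `K`, the
function `w / w_1` is a character. Conversely, a character `ν` yields the isomorphism
`h ↦ ν(h) • t h`, extended by zero outside `K`.
-/

open MonoidAlgebra

theorem exists_monoidHom_of_map_mul_eq {H A : Type*} [Group H] [Group A] {S : Set H}
    (hS : Subgroup.closure S = ⊤) {w : H → A} (hw : ∀ m ∈ S, ∃ a, ∀ u, w (u * m) = w u * a) :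
    ∃ ν : H →* A, ∀ u, w u = w 1 * ν u := by
  have hw' (m : H) : ∃ a, ∀ u, w (u * m) = w u * a := by
    have hm : m ∈ Subgroup.closure S := hS ▸ Subgroup.mem_top m
    induction hm using Subgroup.closure_induction with
    | mem m hm => exact hw m hm
    | one => exact ⟨1, by simp⟩
    | mul x y _ _ hx hy =>
      obtain ⟨a, ha⟩ := hx
      obtain ⟨b, hb⟩ := hy
      exact ⟨a * b, fun u => by rw [← mul_assoc, hb, ha, mul_assoc]⟩
    | inv x _ hx =>
      obtain ⟨a, ha⟩ := hx
      exact ⟨a⁻¹, fun u => by rw [eq_mul_inv_iff_mul_eq, ← ha, inv_mul_cancel_right]⟩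
  choose ν hν using hw'
  refine ⟨MonoidHom.mk' ν fun x y => mul_left_cancel (a := w 1) ?_, fun u => ?_⟩
  · rw [← hν, ← mul_assoc 1, hν, hν, mul_assoc]
  · rw [MonoidHom.mk'_apply, ← hν, one_mul]

section Translates

variable {k G : Type*} [Semiring k] [Group G] {K : Subgroup G} {e x : MonoidAlgebra k G}

theorem of_mul_eq_zero_iff {h : G} : of k G h * x = 0 ↔ x = 0 :=
  ((Group.isUnit h).map (of k G)).mul_right_eq_zero

theorem coeff_of_mul (x : MonoidAlgebra k G) (h u : G) :
    (of k G h * x).coeff u = x.coeff (h⁻¹ * u) := by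
  rw [of_apply, coeff_single_mul_apply, one_mul]

/-- The `k`-span of the translates `h * e` with `h ∈ K`: the left ideal `kK e` of `kK` when `e` is
supported on `K`. It carries the partial comodules under study. -/
noncomputable def translateSpan (K : Subgroup G) (e : MonoidAlgebra k G) :
    Submodule k (MonoidAlgebra k G) :=
  Submodule.span k {x | ∃ h ∈ K, x = of k G h * e}

theorem of_mul_mem_translateSpan {h : G} (hh : h ∈ K) : of k G h * e ∈ translateSpan K e :=
  Submodule.subset_span ⟨h, hh, rfl⟩

theorem self_mem_translateSpan : e ∈ translateSpan K e :=
  Submodule.subset_span ⟨1, K.one_mem, by rw [map_one, one_mul]⟩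

theorem translateSpan_le {V : Submodule k (MonoidAlgebra k G)} :
    translateSpan K e ≤ V ↔ ∀ h ∈ K, of k G h * e ∈ V := by
  refine ⟨fun hle h hh => hle (of_mul_mem_translateSpan hh), fun hmem => Submodule.span_le.2 ?_⟩
  rintro _ ⟨h, hh, rfl⟩
  exact hmem h hh

theorem of_mul_mem_supported_iff (he0 : e ≠ 0) (he : e ∈ supported k k (K : Set G)) {h : G} :
    of k G h * e ∈ supported k k (K : Set G) ↔ h ∈ K := by
  refine ⟨fun hmem => ?_, fun hh => mem_supported'.2 fun u hu => ?_⟩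
  · obtain ⟨m, hm⟩ := Finsupp.ne_iff.1 (coeff_eq_zero.not.2 he0)
    have hmK : m ∈ K := not_imp_comm.1 (mem_supported'.1 he m) hm
    refine (K.mul_mem_cancel_right hmK).1 (not_imp_comm.1 (mem_supported'.1 hmem (h * m)) ?_)
    rwa [coeff_of_mul, inv_mul_cancel_left]
  · rw [coeff_of_mul]
    exact mem_supported'.1 he _ fun hu' => hu ((K.mul_mem_cancel_left (K.inv_mem hh)).1 hu')

theorem translateSpan_le_supported (he : e ∈ supported k k (K : Set G)) :
    translateSpan K e ≤ supported k k (K : Set G) := by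
  obtain rfl | he0 := eq_or_ne e 0
  · exact translateSpan_le.2 fun h _ => by rw [mul_zero]; exact zero_mem _
  · exact translateSpan_le.2 fun h hh => (of_mul_mem_supported_iff he0 he).2 hh

theorem exists_mem_translateSpan_coeff_ne_zero (he0 : e ≠ 0)
    (he : e ∈ supported k k (K : Set G)) {h : G} (hh : h ∈ K) :
    ∃ x ∈ translateSpan K e, x.coeff h ≠ 0 := by
  obtain ⟨m, hm⟩ := Finsupp.ne_iff.1 (coeff_eq_zero.not.2 he0)
  have hmK : m ∈ K := not_imp_comm.1 (mem_supported'.1 he m) hm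
  refine ⟨_, of_mul_mem_translateSpan (K.mul_mem hh (K.inv_mem hmK)), ?_⟩
  rwa [coeff_of_mul, mul_inv_rev, inv_inv, inv_mul_cancel_right]

end Translates

section CharacterTwist

variable {k G : Type*} [CommSemiring k] [Group G] {K : Subgroup G} (ν : K →* kˣ)
  {e x : MonoidAlgebra k G}

/-- The algebra automorphism `h ↦ ν(h) h` of `kK` attached to a character `ν` of `K`, extended to a
linear endomorphism of `kG` by sending the elements of `G` outside `K` to zero. -/
noncomputable def characterTwist : MonoidAlgebra k G →ₗ[k] MonoidAlgebra k G where
  toFun x := ofCoeff (Function.extend Subtype.val (fun h => (ν h : k)) 0 • x.coeff)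
  map_add' x y := by rw [coeff_add, smul_add, ofCoeff_add]
  map_smul' a x := by ext; simp [mul_left_comm]

theorem coeff_characterTwist (x : MonoidAlgebra k G) (h : G) :
    (characterTwist ν x).coeff h
      = Function.extend Subtype.val (fun h => (ν h : k)) 0 h * x.coeff h :=
  rfl

theorem coeff_characterTwist_coe (x : MonoidAlgebra k G) (h : K) :
    (characterTwist ν x).coeff h = ν h * x.coeff h := by
  rw [coeff_characterTwist, Subtype.val_injective.extend_apply]

theorem characterTwist_mem_supported : characterTwist ν x ∈ supported k k (K : Set G) := by
  refine mem_supported'.2 fun h hh => ?_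
  have hrange : ¬∃ u : K, (u : G) = h := fun ⟨u, hu⟩ => hh (hu ▸ u.2)
  rw [coeff_characterTwist, Function.extend_apply' _ _ _ hrange, Pi.zero_apply, zero_mul]

theorem eq_characterTwist_iff (he : e ∈ supported k k (K : Set G)) :
    e = characterTwist ν x ↔ ∀ h : K, e.coeff h = ν h * x.coeff h := by
  refine ⟨fun heq h => heq ▸ coeff_characterTwist_coe ν x h, fun heq => ?_⟩
  ext h
  by_cases hh : h ∈ K
  · rw [coeff_characterTwist_coe ν x ⟨h, hh⟩, ← heq ⟨h, hh⟩]
  · rw [mem_supported'.1 he h hh, mem_supported'.1 (characterTwist_mem_supported ν) h hh]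

theorem characterTwist_of_mul (h : K) (x : MonoidAlgebra k G) :
    characterTwist ν (of k G h * x) = (ν h : k) • (of k G h * characterTwist ν x) := by
  ext u
  rw [coeff_smul_apply, coeff_of_mul, smul_eq_mul]
  by_cases hu : u ∈ K
  · lift u to K using hu
    have huv := coeff_characterTwist_coe ν x (h⁻¹ * u)
    rw [map_mul, Subgroup.coe_mul, Subgroup.coe_inv] at huv
    rw [coeff_characterTwist_coe, coeff_of_mul, huv, ← mul_assoc, ← Units.val_mul, map_inv,
      mul_inv_cancel_left]
  · have hu' : (h : G)⁻¹ * u ∉ K := (K.mul_mem_cancel_left (K.inv_mem h.2)).not.2 hu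
    rw [mem_supported'.1 (characterTwist_mem_supported ν) u hu,
      mem_supported'.1 (characterTwist_mem_supported ν) _ hu', mul_zero]

theorem injOn_characterTwist : Set.InjOn (characterTwist ν) (supported k k (K : Set G)) := by
  intro x hx y hy hxy
  ext h
  by_cases hh : h ∈ K
  · have heq := (eq_characterTwist_iff ν (characterTwist_mem_supported ν)).1 hxy ⟨h, hh⟩
    rw [coeff_characterTwist_coe] at heq
    exact (ν ⟨h, hh⟩).isUnit.mul_left_cancel heq
  · rw [mem_supported'.1 hx h hh, mem_supported'.1 hy h hh]

theorem map_mulLeft_comp_characterTwist_translateSpan {t : G} (ht : t ∈ K) :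
    (translateSpan K e).map (LinearMap.mulLeft k (of k G t) ∘ₗ characterTwist ν)
      = translateSpan K (characterTwist ν e) := by
  have hmap (h : K) : (LinearMap.mulLeft k (of k G t) ∘ₗ characterTwist ν) (of k G h * e)
      = (ν h : k) • (of k G (t * h) * characterTwist ν e) := by
    rw [LinearMap.comp_apply, LinearMap.mulLeft_apply, characterTwist_of_mul, mul_smul_comm,
      ← mul_assoc, ← map_mul]
  apply le_antisymm
  · refine Submodule.map_le_iff_le_comap.2 (translateSpan_le.2 fun h hh => ?_)
    rw [Submodule.mem_comap, hmap ⟨h, hh⟩]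
    exact Submodule.smul_mem _ _ (of_mul_mem_translateSpan (K.mul_mem ht hh))
  · refine translateSpan_le.2 fun h hh => ?_
    let s : K := ⟨t⁻¹ * h, K.mul_mem (K.inv_mem ht) hh⟩
    refine ⟨((ν s)⁻¹ : kˣ) • (of k G s * e), ?_, ?_⟩
    · exact Submodule.smul_mem _ _ (of_mul_mem_translateSpan s.2)
    · rw [Units.smul_def, map_smul, hmap, ← Units.smul_def, ← Units.smul_def, inv_smul_smul,
        mul_inv_cancel_left]

theorem bijOn_mulLeft_comp_characterTwist (he : e ∈ supported k k (K : Set G)) {t : G}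
    (ht : t ∈ K) :
    Set.BijOn (LinearMap.mulLeft k (of k G t) ∘ₗ characterTwist ν) (translateSpan K e)
      (translateSpan K (characterTwist ν e)) := by
  rw [← map_mulLeft_comp_characterTwist_translateSpan ν ht, Submodule.map_coe]
  refine Set.InjOn.bijOn_image ?_
  exact ((Group.isUnit t).map (of k G)).mul_right_injective.comp_injOn
    ((injOn_characterTwist ν).mono (translateSpan_le_supported he))

end CharacterTwist

section RightCoeff

variable {k G M N : Type*} [CommSemiring k]
  [AddCommMonoid M] [Module k M] [AddCommMonoid N] [Module k N]

open scoped Classical in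
/-- The coefficients in `M` of a tensor in `M ⊗ kG` with respect to the basis `G` of `kG`. -/
noncomputable def rightCoeff : M ⊗[k] MonoidAlgebra k G ≃ₗ[k] (G →₀ M) :=
  (coeffLinearEquiv k).lTensor M ≪≫ₗ TensorProduct.finsuppScalarRight k k M G

theorem rightCoeff_tmul (m : M) (x : MonoidAlgebra k G) (u : G) :
    rightCoeff (m ⊗ₜ[k] x) u = x.coeff u • m := by
  classical exact TensorProduct.finsuppScalarRight_apply_tmul_apply m x.coeff u

theorem rightCoeff_map_id (f : M →ₗ[k] N) (z : M ⊗[k] MonoidAlgebra k G) (u : G) :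
    rightCoeff (TensorProduct.map f LinearMap.id z) u = f (rightCoeff z u) := by
  induction z with
  | zero => simp only [map_zero, Finsupp.zero_apply]
  | tmul m x => rw [TensorProduct.map_tmul, LinearMap.id_apply, rightCoeff_tmul, rightCoeff_tmul,
      map_smul]
  | add y z hy hz => simp only [map_add, Finsupp.add_apply, hy, hz]

end RightCoeff

section PartialComodule

variable {k G : Type*} [Field k] [Group G] {K : Subgroup G} {e e' : MonoidAlgebra k G} {g g' : G}
  {f : MonoidAlgebra k G →ₗ[k] MonoidAlgebra k G}

/-- The partial coaction `x ↦ x₍₁₎ e ⊗ g x₍₂₎`, defined on all of `kG`. -/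
noncomputable def partialCoaction (e : MonoidAlgebra k G) (g : G) :
    MonoidAlgebra k G →ₗ[k] MonoidAlgebra k G ⊗[k] MonoidAlgebra k G :=
  LinearMap.mulLeft k (1 ⊗ₜ[k] of k G g) ∘ₗ LinearMap.mulRight k (e ⊗ₜ[k] 1) ∘ₗ gaComul k G

theorem gaComul_single (h : G) (a : k) :
    gaComul k G (single h a) = a • (of k G h ⊗ₜ[k] of k G h) :=
  Finsupp.sum_single_index (zero_smul k _)

theorem rightCoeff_partialCoaction (e : MonoidAlgebra k G) (g : G) (x : MonoidAlgebra k G)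
    (u : G) :
    rightCoeff (partialCoaction e g x) (g * u) = x.coeff u • (of k G u * e) := by
  classical
  induction x using MonoidAlgebra.induction_linear with
  | zero => simp only [map_zero, coeff_zero, Finsupp.zero_apply, zero_smul]
  | add x y hx hy => simp only [map_add, coeff_add, Finsupp.add_apply, hx, hy, add_smul]
  | single h a =>
    have hsingle : partialCoaction e g (single h a)
        = a • ((of k G h * e) ⊗ₜ[k] of k G (g * h)) := by
      simp only [partialCoaction, LinearMap.comp_apply, LinearMap.mulLeft_apply,
        LinearMap.mulRight_apply, gaComul_single, smul_mul_assoc, mul_smul_comm,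
        Algebra.TensorProduct.tmul_mul_tmul, one_mul, mul_one, map_mul]
    rw [hsingle, map_smul, Finsupp.smul_apply, rightCoeff_tmul, of_apply, coeff_single,
      coeff_single, Finsupp.single_apply, Finsupp.single_apply, mul_right_inj]
    split_ifs with hu
    · rw [hu, one_smul]
    · rw [zero_smul, zero_smul, smul_zero]

/-- On the subspace `V`, the linear map `f` is a morphism of partial comodules from the coaction
`partialCoaction e g` to the coaction `partialCoaction e' g'`. -/
def IsColinearOn (f : MonoidAlgebra k G →ₗ[k] MonoidAlgebra k G)
    (V : Submodule k (MonoidAlgebra k G)) (e e' : MonoidAlgebra k G) (g g' : G) : Prop :=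
  ∀ x ∈ V, TensorProduct.map f LinearMap.id (partialCoaction e g x) = partialCoaction e' g' (f x)

theorem isColinearOn_iff {V : Submodule k (MonoidAlgebra k G)} :
    IsColinearOn f V e e' g g' ↔ ∀ x ∈ V, ∀ h, x.coeff h • f (of k G h * e)
      = (f x).coeff (g'⁻¹ * g * h) • (of k G (g'⁻¹ * g * h) * e') := by
  refine forall₂_congr fun x _ => ?_
  have hg (h : G) : g * h = g' * (g'⁻¹ * g * h) := by group
  rw [← rightCoeff.injective.eq_iff, DFunLike.ext_iff, ← (Equiv.mulLeft g).forall_congr_right]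
  refine forall_congr' fun h => ?_
  simp only [Equiv.coe_mulLeft, rightCoeff_map_id, rightCoeff_partialCoaction, map_smul]
  rw [hg, rightCoeff_partialCoaction]

theorem isColinearOn_mulLeft_comp_characterTwist (ν : K →* kˣ)
    (he : e ∈ supported k k (K : Set G)) :
    IsColinearOn (LinearMap.mulLeft k (of k G (g'⁻¹ * g)) ∘ₗ characterTwist ν) (translateSpan K e)
      e (characterTwist ν e) g g' := by
  refine isColinearOn_iff.2 fun x hx h => ?_
  simp only [LinearMap.comp_apply, LinearMap.mulLeft_apply, coeff_of_mul, inv_mul_cancel_left]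
  by_cases hh : h ∈ K
  · lift h to K using hh
    rw [characterTwist_of_mul, coeff_characterTwist_coe, mul_smul_comm, ← mul_assoc, ← map_mul,
      smul_smul, mul_comm]
  · rw [mem_supported'.1 (translateSpan_le_supported he hx) h hh,
      mem_supported'.1 (characterTwist_mem_supported ν) h hh, zero_smul, zero_smul]

namespace IsColinearOn

theorem exists_weights (hf : IsColinearOn f (translateSpan K e) e e' g g')
    (hinj : Set.InjOn f (translateSpan K e)) (he0 : e ≠ 0) (he : e ∈ supported k k (K : Set G)) :
    ∃ w : K → kˣ, ∀ u : K,
      f (of k G u * e) = (w u : k) • (of k G (g'⁻¹ * g * u) * e') := by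
  suffices hunit : ∀ u : K, ∃ c : kˣ,
      f (of k G u * e) = (c : k) • (of k G (g'⁻¹ * g * u) * e') from Classical.skolem.1 hunit
  intro u
  obtain ⟨x, hx, hxu⟩ := exists_mem_translateSpan_coeff_ne_zero he0 he u.2
  have heq : f (of k G u * e) = ((x.coeff u)⁻¹ * (f x).coeff (g'⁻¹ * g * u)) •
      (of k G (g'⁻¹ * g * u) * e') := by
    rw [mul_smul, ← isColinearOn_iff.1 hf x hx u, inv_smul_smul₀ hxu]
  refine ⟨Units.mk0 _ fun hzero => ?_, heq⟩
  rw [hzero, zero_smul, ← map_zero f] at heq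
  exact he0 (of_mul_eq_zero_iff.1 (hinj (of_mul_mem_translateSpan u.2) (zero_mem _) heq))

variable {w : K → kˣ}

theorem coeff_smul_map (hf : IsColinearOn f (translateSpan K e) e e' g g')
    (hw : ∀ u : K, f (of k G u * e) = (w u : k) • (of k G (g'⁻¹ * g * u) * e')) (u : K) (m : G) :
    e.coeff m • f (of k G (u * m) * e)
      = (w u * e'.coeff m) • (of k G (g'⁻¹ * g * (u * m)) * e') := by
  have heq := isColinearOn_iff.1 hf _ (of_mul_mem_translateSpan u.2) (u * m)
  rwa [hw, coeff_smul_apply, coeff_of_mul, coeff_of_mul, inv_mul_cancel_left,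
    ← mul_assoc (g'⁻¹ * g), inv_mul_cancel_left, smul_eq_mul, mul_assoc (g'⁻¹ * g)] at heq

theorem weight_mul (hf : IsColinearOn f (translateSpan K e) e e' g g') (he0' : e' ≠ 0)
    (hw : ∀ u : K, f (of k G u * e) = (w u : k) • (of k G (g'⁻¹ * g * u) * e')) (u m : K) :
    w (u * m) * e.coeff m = w u * e'.coeff m := by
  have heq := hf.coeff_smul_map hw u m
  rw [← Subgroup.coe_mul, hw, smul_smul] at heq
  rw [mul_comm]
  exact smul_left_injective k (of_mul_eq_zero_iff.not.2 he0') heq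

theorem support_eq (hf : IsColinearOn f (translateSpan K e) e e' g g') (he0' : e' ≠ 0)
    (he : e ∈ supported k k (K : Set G))
    (hw : ∀ u : K, f (of k G u * e) = (w u : k) • (of k G (g'⁻¹ * g * u) * e')) :
    e'.coeff.support = e.coeff.support := by
  ext m
  refine not_iff_not.1 ?_
  simp only [Finsupp.notMem_support_iff]
  by_cases hm : m ∈ K
  · have heq := hf.weight_mul he0' hw 1 ⟨m, hm⟩
    rw [← (w 1).isUnit.mul_right_eq_zero, ← heq, (w _).isUnit.mul_right_eq_zero]
  · have heq := hf.coeff_smul_map hw 1 m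
    have hem := mem_supported'.1 he m hm
    rw [hem, zero_smul, eq_comm, smul_eq_zero_iff_left (of_mul_eq_zero_iff.not.2 he0'),
      (w 1).isUnit.mul_right_eq_zero] at heq
    exact iff_of_true heq hem

theorem exists_character (hf : IsColinearOn f (translateSpan K e) e e' g g') (he0' : e' ≠ 0)
    (hK : K = Subgroup.closure (e.coeff.support : Set G))
    (hw : ∀ u : K, f (of k G u * e) = (w u : k) • (of k G (g'⁻¹ * g * u) * e')) :
    ∃ ν : K →* kˣ, ∀ h : K, e'.coeff h = ν h * e.coeff h := by
  have hgen : Subgroup.closure ((↑) ⁻¹' (e.coeff.support : Set G) : Set K) = ⊤ := by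
    subst hK
    exact Subgroup.closure_closure_coe_preimage
  obtain ⟨ν, hν⟩ := exists_monoidHom_of_map_mul_eq hgen (w := w) fun m hm => by
    refine ⟨(w 1)⁻¹ * w m, fun u => ?_⟩
    rw [← mul_assoc, mul_right_comm, eq_mul_inv_iff_mul_eq]
    refine Units.ext (mul_right_cancel₀ (Finsupp.mem_support_iff.1 hm) ?_)
    have hum := hf.weight_mul he0' hw u m
    have h1m := hf.weight_mul he0' hw 1 m
    rw [one_mul] at h1m
    push_cast
    linear_combination (w 1 : k) * hum - w u * h1m
  refine ⟨ν, fun h => (w 1).isUnit.mul_left_cancel ?_⟩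
  rw [← mul_assoc, ← Units.val_mul, ← hν h, ← hf.weight_mul he0' hw, one_mul]

end IsColinearOn

end PartialComodule

theorem stmt18_general (k G : Type*) [Field k] [Group G] (e e' : MonoidAlgebra k G) (he0 : e ≠ 0)
    (K K' : Subgroup G)
    (hK : K = Subgroup.closure (e.coeff.support : Set G))
    (hK' : K' = Subgroup.closure (e'.coeff.support : Set G))
    (g g' : G) :
    (∃ f : MonoidAlgebra k G →ₗ[k] MonoidAlgebra k G,
      Set.BijOn f (translateSpan K e) (translateSpan K' e') ∧
        IsColinearOn f (translateSpan K e) e e' g g')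
    ↔ (K = K'
      ∧ (fun x => g * x) '' (K : Set G) = (fun x => g' * x) '' (K' : Set G)
      ∧ ∃ ν : K →* kˣ, ∀ (h : G) (hh : h ∈ K),
        e'.coeff h = ((ν ⟨h, hh⟩ : kˣ) : k) * e.coeff h) := by
  have he : e ∈ supported k k (K : Set G) := hK ▸ Subgroup.subset_closure
  have he' : e' ∈ supported k k (K' : Set G) := hK' ▸ Subgroup.subset_closure
  constructor
  · rintro ⟨f, hbij, hf⟩
    obtain ⟨w, hw⟩ := hf.exists_weights hbij.injOn he0 he
    have hfe : f e = (w 1 : k) • (of k G (g'⁻¹ * g) * e') := by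
      simpa only [OneMemClass.coe_one, map_one, one_mul, mul_one] using hw 1
    have hmem : of k G (g'⁻¹ * g) * e' ∈ translateSpan K' e' :=
      (Submodule.smul_mem_iff _ (w 1).ne_zero).1 (hfe ▸ hbij.mapsTo self_mem_translateSpan)
    have he0' : e' ≠ 0 := fun hzero =>
      he0 (hbij.injOn self_mem_translateSpan (zero_mem _) (by
        rw [hfe, hzero, mul_zero, smul_zero, map_zero]))
    obtain rfl : K = K' := by rw [hK, hK', hf.support_eq he0' he hw]
    have ht : g'⁻¹ * g ∈ K :=
      (of_mul_mem_supported_iff he0' he').1 (translateSpan_le_supported he' hmem)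
    obtain ⟨ν, hν⟩ := hf.exists_character he0' hK hw
    exact ⟨rfl, ((leftCoset_eq_iff K).2 ht).symm, ν, fun h hh => hν ⟨h, hh⟩⟩
  · rintro ⟨rfl, hcoset, ν, hν⟩
    have ht : g'⁻¹ * g ∈ K := (leftCoset_eq_iff K).1 hcoset.symm
    obtain rfl : e' = characterTwist ν e := (eq_characterTwist_iff ν he').2 fun h => hν h h.2
    exact ⟨_, bijOn_mulLeft_comp_characterTwist ν he ht,
      isColinearOn_mulLeft_comp_characterTwist ν he⟩

/-- classification of isomorphisms between the simple partial `kG`-comodules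
`(I, ρ)` and `(I', ρ')` built from subcentral idempotents `e, e'` and shifts `g, g'`:
an isomorphism of partial comodules exists iff `K = K'`, `g·K = g'·K'`, and some
multiplicative character `ν` of `K` transforms `e` into `e'` via `h ↦ ν(h)·h`. -/
theorem stmt18 (k G : Type*) [Field k] [Group G] [Fintype G]
    (hchar : (Fintype.card G : k) ≠ 0)
    (e e' : MonoidAlgebra k G)
    (he0 : e ≠ 0) (hidem : e * e = e)
    (hsub : (e ⊗ₜ[k] (1 : MonoidAlgebra k G)) * gaComul k G e
      = gaComul k G e * (e ⊗ₜ[k] (1 : MonoidAlgebra k G)))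
    (he0' : e' ≠ 0) (hidem' : e' * e' = e')
    (hsub' : (e' ⊗ₜ[k] (1 : MonoidAlgebra k G)) * gaComul k G e'
      = gaComul k G e' * (e' ⊗ₜ[k] (1 : MonoidAlgebra k G)))
    (K K' : Subgroup G)
    (hK : K = Subgroup.closure (e.coeff.support : Set G))
    (hK' : K' = Subgroup.closure (e'.coeff.support : Set G))
    (I I' : Submodule k (MonoidAlgebra k G))
    (hI : I = Submodule.span k
      {x : MonoidAlgebra k G | ∃ h ∈ K, x = MonoidAlgebra.of k G h * e})
    (hI' : I' = Submodule.span k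
      {x : MonoidAlgebra k G | ∃ h ∈ K', x = MonoidAlgebra.of k G h * e'})
    (g g' : G) :
    -- there is an isomorphism of partial comodules `(I, ρ) ≅ (I', ρ')` ...
    (∃ f : MonoidAlgebra k G →ₗ[k] MonoidAlgebra k G,
      (∀ x ∈ I, f x ∈ I') ∧ Set.BijOn f I I' ∧
      (∀ x ∈ I,
        TensorProduct.map f LinearMap.id
            (((1 : MonoidAlgebra k G) ⊗ₜ[k] MonoidAlgebra.of k G g)
              * (gaComul k G x * (e ⊗ₜ[k] (1 : MonoidAlgebra k G))))
          = ((1 : MonoidAlgebra k G) ⊗ₜ[k] MonoidAlgebra.of k G g')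
              * (gaComul k G (f x) * (e' ⊗ₜ[k] (1 : MonoidAlgebra k G)))))
    -- ... if and only if `K = K'`, `g·K = g'·K'`, and a character `ν` of `K` maps `e` to `e'`
    ↔ (K = K'
      ∧ (fun x => g * x) '' (K : Set G) = (fun x => g' * x) '' (K' : Set G)
      ∧ ∃ ν : K →* kˣ, ∀ (h : G) (hh : h ∈ K), e'.coeff h = ((ν ⟨h, hh⟩ : kˣ) : k) * e.coeff h) := by
  subst hI hI'
  exact (exists_congr fun f => and_iff_right_of_imp fun hf => hf.1.mapsTo).trans
    (stmt18_general k G e e' he0 K K' hK hK' g g')
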